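/- Let z, z' ∈ {h, p, r, c, rc}, let Σ be a finite alphabet with |Σ| ≥ 2, and let α, β be array patterns. If L_{Σ,z}(α) = L_{Σ,z'}(β), then α and β are equivalent up to a renaming of variables. -/

import Mathlib

/-- A nonempty rectangular two-dimensional word (array) over `σ`. -/
structure Arr (σ : Type) : Type where
  rows : ℕ
  cols : ℕ
  rows_pos : 0 < rows
  cols_pos : 0 < cols
  entry : Fin rows → Fin cols → σ

namespace Arr

variable {σ γ : Type}

/-- Column concatenation: place `V` to the right of `U`; `none` if heights differ. -/
def colCat (U V : Arr σ) : Option (Arr σ) :=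
  if h : U.rows = V.rows then
    some { rows := U.rows
           cols := U.cols + V.cols
           rows_pos := U.rows_pos
           cols_pos := by have := U.cols_pos; omega
           entry := fun i j =>
             if hj : (j : ℕ) < U.cols then U.entry i ⟨j, hj⟩
             else V.entry (Fin.cast h i) ⟨(j : ℕ) - U.cols, by have := j.isLt; omega⟩ }
  else none

/-- Row concatenation: place `V` below `U`; `none` if widths differ. -/
def rowCat (U V : Arr σ) : Option (Arr σ) :=
  if h : U.cols = V.cols then
    some { rows := U.rows + V.rows
           cols := U.cols
           rows_pos := by have := U.rows_pos; omega
           cols_pos := U.cols_pos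
           entry := fun i j =>
             if hi : (i : ℕ) < U.rows then U.entry ⟨i, hi⟩ j
             else V.entry ⟨(i : ℕ) - U.rows, by have := i.isLt; omega⟩ (Fin.cast h j) }
  else none

/-- A two-dimensional morphism: compatible with both concatenations,
with "both sides undefined" counting as equal. -/
def IsMorphism (h : Arr σ → Arr γ) : Prop :=
  (∀ V W : Arr σ, Option.map h (colCat V W) = colCat (h V) (h W)) ∧
  (∀ V W : Arr σ, Option.map h (rowCat V W) = rowCat (h V) (h W))

/-- Concatenate a nonempty list of (possibly undefined) arrays with the
given partial concatenation operation; `none` on the empty list. -/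
def catListO (op : Arr σ → Arr σ → Option (Arr σ)) : List (Option (Arr σ)) → Option (Arr σ)
  | [] => none
  | [a] => a
  | a :: b :: rest => a.bind fun x => (catListO op (b :: rest)).bind fun y => op x y

/-- `g_{⦶,⊖}`: substitute and assemble, first column-concatenating each row,
then row-concatenating the rows. -/
def subCR {X : Type} (g : X → Arr σ) (α : Arr X) : Option (Arr σ) :=
  catListO rowCat (List.ofFn fun i : Fin α.rows =>
    catListO colCat (List.ofFn fun j : Fin α.cols => some (g (α.entry i j))))

/-- `g_{⊖,⦶}`: substitute and assemble, first row-concatenating each column,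
then column-concatenating the columns. -/
def subRC {X : Type} (g : X → Arr σ) (α : Arr X) : Option (Arr σ) :=
  catListO colCat (List.ofFn fun j : Fin α.cols =>
    catListO rowCat (List.ofFn fun i : Fin α.rows => some (g (α.entry i j))))

/-- A substitution is uniform if all images have the same dimensions. -/
def Uniform {X : Type} (g : X → Arr σ) : Prop :=
  ∃ m n : ℕ, ∀ x : X, (g x).rows = m ∧ (g x).cols = n

end Arr

open Arr

/-- The five modes of array pattern languages. -/
inductive Mode | h | p | r | c | rc
deriving DecidableEq

/-- The array pattern language of an array pattern (an array over the
variables `ℕ`) in each mode. -/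
def langOf (σ : Type) : Mode → Arr ℕ → Set (Arr σ)
  | Mode.h, α => {W | ∃ g : Arr ℕ → Arr σ, IsMorphism g ∧ g α = W}
  | Mode.p, α => {W | ∃ s : ℕ → Arr σ, subCR s α = some W ∧ subRC s α = some W}
  | Mode.r, α => {W | ∃ s : ℕ → Arr σ, subCR s α = some W}
  | Mode.c, α => {W | ∃ s : ℕ → Arr σ, subRC s α = some W}
  | Mode.rc, α =>
      {W | ∃ s : ℕ → Arr σ, subCR s α = some W} ∪ {W | ∃ s : ℕ → Arr σ, subRC s α = some W}

/-- Two array patterns are equivalent up to a renaming of variables. -/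
def EquivRen (α β : Arr ℕ) : Prop :=
  ∃ (hr : α.rows = β.rows) (hc : α.cols = β.cols),
    ∀ (i i' : Fin α.rows) (j j' : Fin α.cols),
      α.entry i j = α.entry i' j' ↔
        β.entry (Fin.cast hr i) (Fin.cast hc j) =
          β.entry (Fin.cast hr i') (Fin.cast hc j')

/-!
A mode `z` only matters for images that are larger than the pattern. Every language of `α` contains
all letter-to-letter images `α.map f`, and every image of `β` is at least as large as `β`, so equal
languages force equal dimensions. An image of `β` of the same size as `β` uses only `1 × 1`
substitution words, so it is some `β.map g`. Hence each `α.map f` equals some `β.map g`; letting `f`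
separate two variables of `α` shows that positions with distinct variables in `α` have distinct
variables in `β`, and symmetrically.
-/

theorem card_le_sum_of_pos {ι : Type*} [Fintype ι] {f : ι → ℕ} (hf : ∀ i, 0 < f i) :
    Fintype.card ι ≤ ∑ i, f i :=
  calc Fintype.card ι
    _ = ∑ _i : ι, 1 := Fintype.card_eq_sum_ones
    _ ≤ ∑ i, f i := Finset.sum_le_sum fun i _ => hf i

theorem eq_one_of_sum_eq_card {ι : Type*} [Fintype ι] {f : ι → ℕ} (hf : ∀ i, 0 < f i)
    (h : ∑ i, f i = Fintype.card ι) (i : ι) : f i = 1 := by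
  rw [Fintype.card_eq_sum_ones, eq_comm, Finset.sum_eq_sum_iff_of_le fun i _ => hf i] at h
  exact (h i (Finset.mem_univ i)).symm

namespace Arr

variable {σ γ X : Type}

theorem eq_iff_entry_eq {A B : Arr σ} :
    A = B ↔ ∃ (hr : A.rows = B.rows) (hc : A.cols = B.cols),
      ∀ i j, A.entry i j = B.entry (Fin.cast hr i) (Fin.cast hc j) := by
  constructor
  · rintro rfl
    exact ⟨rfl, rfl, fun _ _ => rfl⟩
  · obtain ⟨m, n, _, _, a⟩ := A
    obtain ⟨m', n', _, _, b⟩ := B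
    rintro ⟨hr, hc, h⟩
    obtain rfl : m = m' := hr
    obtain rfl : n = n' := hc
    congr
    exact funext₂ h

/-- The array obtained by applying `f` to every entry. -/
def map (f : σ → γ) (A : Arr σ) : Arr γ :=
  ⟨A.rows, A.cols, A.rows_pos, A.cols_pos, fun i j => f (A.entry i j)⟩

/-- The transposed array; it exchanges the two concatenations and thereby `subCR` and `subRC`. -/
def transpose (A : Arr σ) : Arr σ :=
  ⟨A.cols, A.rows, A.cols_pos, A.rows_pos, fun i j => A.entry j i⟩

/-- The `1 × 1` array with entry `x`. -/
def single (x : σ) : Arr σ :=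
  ⟨1, 1, one_pos, one_pos, fun _ _ => x⟩

/-- The `i`-th row of `A`, as an array with one row. -/
def row (A : Arr σ) (i : Fin A.rows) : Arr σ :=
  ⟨1, A.cols, one_pos, A.cols_pos, fun _ j => A.entry i j⟩

/-- The `j`-th column of `A`, as an array with one column. -/
def col (A : Arr σ) (j : Fin A.cols) : Arr σ :=
  ⟨A.rows, 1, A.rows_pos, one_pos, fun i _ => A.entry i j⟩

/-- The top left entry of `A`. -/
def corner (A : Arr σ) : σ :=
  A.entry ⟨0, A.rows_pos⟩ ⟨0, A.cols_pos⟩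

theorem eq_single_corner {A : Arr σ} (hr : A.rows = 1) (hc : A.cols = 1) :
    A = single A.corner := by
  obtain ⟨m, n, _, _, a⟩ := A
  obtain rfl : m = 1 := hr
  obtain rfl : n = 1 := hc
  exact eq_iff_entry_eq.mpr ⟨rfl, rfl, fun i j => congrArg₂ a (Subsingleton.elim i _)
    (Subsingleton.elim j _)⟩

theorem map_transpose_colCat (U V : Arr σ) :
    (colCat U V).map transpose = rowCat U.transpose V.transpose := by
  simp only [colCat, apply_dite (Option.map transpose), Option.map_some, Option.map_none]
  rfl

theorem map_transpose_rowCat (U V : Arr σ) :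
    (rowCat U V).map transpose = colCat U.transpose V.transpose := by
  simp only [rowCat, apply_dite (Option.map transpose), Option.map_some, Option.map_none]
  rfl

theorem isMorphism_map (f : σ → γ) : IsMorphism (map f) := by
  constructor <;> intro V W
  · simp only [colCat, apply_dite (Option.map (map f)), Option.map_some, Option.map_none, map,
      apply_dite f]
    rfl
  · simp only [rowCat, apply_dite (Option.map (map f)), Option.map_some, Option.map_none, map,
      apply_dite f]
    rfl

theorem dims_of_colCat_eq_some {U V W : Arr σ} (h : colCat U V = some W) :
    W.cols = U.cols + V.cols ∧ U.rows = W.rows ∧ V.rows = W.rows := by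
  rw [colCat, Option.dite_none_right_eq_some] at h
  obtain ⟨hr, hW⟩ := h
  obtain rfl := Option.some.inj hW
  exact ⟨rfl, rfl, hr.symm⟩

theorem dims_of_rowCat_eq_some {U V W : Arr σ} (h : rowCat U V = some W) :
    W.rows = U.rows + V.rows ∧ U.cols = W.cols ∧ V.cols = W.cols := by
  rw [rowCat, Option.dite_none_right_eq_some] at h
  obtain ⟨hc, hW⟩ := h
  obtain rfl := Option.some.inj hW
  exact ⟨rfl, rfl, hc.symm⟩

section catListO

variable {op : Arr σ → Arr σ → Option (Arr σ)}

theorem map_catListO {op' : Arr γ → Arr γ → Option (Arr γ)} {f : Arr σ → Arr γ}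
    (hf : ∀ V W, (op V W).map f = op' (f V) (f W)) (l : List (Option (Arr σ))) :
    (catListO op l).map f = catListO op' (l.map (Option.map f)) := by
  induction l with
  | nil => rfl
  | cons a l ih =>
    cases l with
    | nil => rfl
    | cons b l =>
      simp only [List.map_cons, catListO] at ih ⊢
      rw [← ih]
      cases a with
      | none => rfl
      | some x =>
        cases catListO op (b :: l) with
        | none => rfl
        | some y => exact hf x y

theorem exists_of_catListO_ofFn_eq_some {len width : Arr σ → ℕ}
    (hop : ∀ {U V W}, op U V = some W →
      len W = len U + len V ∧ width U = width W ∧ width V = width W)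
    {n : ℕ} {F : Fin n → Option (Arr σ)} {W : Arr σ} (h : catListO op (List.ofFn F) = some W) :
    ∃ A : Fin n → Arr σ, (∀ i, F i = some (A i)) ∧
      len W = ∑ i, len (A i) ∧ ∀ i, width (A i) = width W := by
  induction n generalizing W with
  | zero => simp [catListO] at h
  | succ n ih =>
    cases n with
    | zero => exact ⟨fun _ => W, by simpa [catListO] using h, by simp, fun _ => rfl⟩
    | succ n =>
      rw [List.ofFn_succ, List.ofFn_succ, catListO, Option.bind_eq_some_iff] at h
      obtain ⟨U, hU, h⟩ := h
      obtain ⟨V, hV, hUV⟩ := Option.bind_eq_some_iff.mp h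
      obtain ⟨A, hA, hlen, hwidth⟩ := ih (F := fun i => F i.succ) (by rwa [List.ofFn_succ])
      obtain ⟨hlenW, hwidthU, hwidthV⟩ := hop hUV
      refine ⟨Fin.cons U A, Fin.cases hU hA, ?_, Fin.cases hwidthU fun i => ?_⟩
      · rw [Fin.sum_univ_succ, hlenW, hlen]
        rfl
      · exact (hwidth i).trans hwidthV

end catListO

theorem colCat_col_zero {m n : ℕ} (hm : 0 < m) (e : Fin m → Fin (n + 2) → σ) :
    colCat (col ⟨m, n + 2, hm, Nat.succ_pos _, e⟩ 0)
      ⟨m, n + 1, hm, Nat.succ_pos _, fun i j => e i j.succ⟩ =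
      some ⟨m, n + 2, hm, Nat.succ_pos _, e⟩ := by
  refine (dif_pos rfl).trans (congrArg some (eq_iff_entry_eq.mpr ⟨rfl, Nat.add_comm _ _, ?_⟩))
  rintro i ⟨_ | j, hj⟩ <;> rfl

theorem catListO_colCat_col (A : Arr σ) :
    catListO colCat (List.ofFn fun j => some (A.col j)) = some A := by
  obtain ⟨m, n, hm, hn, e⟩ := A
  induction n with
  | zero => exact absurd hn (lt_irrefl 0)
  | succ n ih =>
    cases n with
    | zero =>
      rw [List.ofFn_succ, List.ofFn_zero, catListO, Option.some_inj, eq_iff_entry_eq]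
      exact ⟨rfl, rfl, fun i j => congrArg (e i) (Fin.fin_one_eq_zero j).symm⟩
    | succ n =>
      have htail := ih (Nat.succ_pos n) fun i j => e i j.succ
      rw [List.ofFn_succ] at htail
      rw [List.ofFn_succ, List.ofFn_succ, catListO, Option.bind_some]
      exact (congrArg (Option.bind · _) htail).trans (colCat_col_zero hm e)

theorem catListO_rowCat_row (A : Arr σ) :
    catListO rowCat (List.ofFn fun i => some (A.row i)) = some A := by
  have h := congrArg (Option.map transpose) (catListO_colCat_col A.transpose)
  rwa [map_catListO map_transpose_colCat, List.map_ofFn] at h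

theorem subCR_single (A : Arr X) : subCR single A = some A :=
  calc subCR single A
    _ = catListO rowCat (List.ofFn fun i =>
          catListO colCat (List.ofFn fun j => some ((A.row i).col j))) := rfl
    _ = catListO rowCat (List.ofFn fun i => some (A.row i)) := by simp only [catListO_colCat_col]
    _ = some A := catListO_rowCat_row A

theorem map_subCR {g : Arr σ → Arr γ} (hg : IsMorphism g) (s : X → Arr σ) (α : Arr X) :
    (subCR s α).map g = subCR (g ∘ s) α := by
  simp only [subCR, map_catListO hg.2, map_catListO hg.1, List.map_ofFn, Function.comp_def,
    Option.map_some]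

theorem map_transpose_subRC (s : X → Arr σ) (α : Arr X) :
    (subRC s α).map transpose = subCR (transpose ∘ s) α.transpose := by
  simp only [subRC, subCR, map_catListO map_transpose_colCat, map_catListO map_transpose_rowCat,
    List.map_ofFn, Function.comp_def, Option.map_some]
  rfl

theorem subRC_eq_some_iff {s : X → Arr σ} {α : Arr X} {W : Arr σ} :
    subRC s α = some W ↔ subCR (transpose ∘ s) α.transpose = some W.transpose := by
  have transpose_injective : Function.Injective (transpose (σ := σ)) :=
    Function.LeftInverse.injective (g := transpose) fun _ => rfl
  rw [← map_transpose_subRC, ← Option.map_some, (Option.map_injective transpose_injective).eq_iff]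

theorem subCR_comp_single {g : Arr X → Arr σ} (hg : IsMorphism g) (α : Arr X) :
    subCR (g ∘ single) α = some (g α) := by
  rw [← map_subCR hg, subCR_single, Option.map_some]

theorem subCR_single_comp (f : X → σ) (α : Arr X) : subCR (single ∘ f) α = some (α.map f) :=
  subCR_comp_single (isMorphism_map f) α

theorem subRC_single_comp (f : X → σ) (α : Arr X) : subRC (single ∘ f) α = some (α.map f) :=
  subRC_eq_some_iff.mpr (subCR_single_comp f α.transpose)

section subCR

variable {s : X → Arr σ} {α : Arr X} {W : Arr σ}

theorem exists_heights_of_subCR_eq_some (h : subCR s α = some W) :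
    ∃ height : Fin α.rows → ℕ, W.rows = ∑ i, height i ∧
      (∀ i j, (s (α.entry i j)).rows = height i) ∧
      ∀ i, W.cols = ∑ j, (s (α.entry i j)).cols := by
  obtain ⟨R, hR, hrows, hcols⟩ := exists_of_catListO_ofFn_eq_some dims_of_rowCat_eq_some h
  have hrow (i) : (R i).cols = ∑ j, (s (α.entry i j)).cols ∧
      ∀ j, (s (α.entry i j)).rows = (R i).rows := by
    obtain ⟨A, hA, hlen, hwidth⟩ := exists_of_catListO_ofFn_eq_some dims_of_colCat_eq_some (hR i)
    obtain rfl : (fun j => s (α.entry i j)) = A := funext fun j => Option.some.inj (hA j)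
    exact ⟨hlen, hwidth⟩
  exact ⟨fun i => (R i).rows, hrows, fun i => (hrow i).2,
    fun i => (hcols i).symm.trans (hrow i).1⟩

theorem rows_le_of_subCR_eq_some (h : subCR s α = some W) : α.rows ≤ W.rows := by
  obtain ⟨height, hrows, hheight, -⟩ := exists_heights_of_subCR_eq_some h
  have height_pos (i) : 0 < height i := hheight i ⟨0, α.cols_pos⟩ ▸ (s _).rows_pos
  simpa only [hrows, Fintype.card_fin] using card_le_sum_of_pos height_pos

theorem cols_le_of_subCR_eq_some (h : subCR s α = some W) : α.cols ≤ W.cols := by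
  obtain ⟨-, -, -, hcols⟩ := exists_heights_of_subCR_eq_some h
  simpa only [hcols ⟨0, α.rows_pos⟩, Fintype.card_fin] using
    card_le_sum_of_pos fun j => (s (α.entry ⟨0, α.rows_pos⟩ j)).cols_pos

theorem exists_eq_map_of_subCR_eq_some (h : subCR s α = some W) (hr : W.rows = α.rows)
    (hc : W.cols = α.cols) : ∃ f : X → σ, W = α.map f := by
  obtain ⟨height, hrows, hheight, hcols⟩ := exists_heights_of_subCR_eq_some h
  have height_pos (i) : 0 < height i := hheight i ⟨0, α.cols_pos⟩ ▸ (s _).rows_pos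
  have rows_eq_one (i j) : (s (α.entry i j)).rows = 1 :=
    (hheight i j).trans <| eq_one_of_sum_eq_card height_pos (by
      rw [← hrows, hr, Fintype.card_fin]) i
  have cols_eq_one (i j) : (s (α.entry i j)).cols = 1 :=
    eq_one_of_sum_eq_card (fun j => (s (α.entry i j)).cols_pos) (by
      rw [← hcols, hc, Fintype.card_fin]) j
  have subCR_eq : subCR s α = subCR (single ∘ corner ∘ s) α := by
    simp only [subCR, Function.comp_apply,
      ← eq_single_corner (rows_eq_one _ _) (cols_eq_one _ _)]
  refine ⟨corner ∘ s, Option.some.inj ?_⟩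
  rw [← h, subCR_eq, subCR_single_comp]

end subCR

theorem map_mem_langOf (f : ℕ → σ) (z : Mode) (α : Arr ℕ) : α.map f ∈ langOf σ z α := by
  have hCR := subCR_single_comp f α
  have hRC := subRC_single_comp f α
  cases z with
  | h => exact ⟨map f, isMorphism_map f, rfl⟩
  | p => exact ⟨_, hCR, hRC⟩
  | r => exact ⟨_, hCR⟩
  | c => exact ⟨_, hRC⟩
  | rc => exact Or.inl ⟨_, hCR⟩

theorem langOf_subset_langOf_rc (z : Mode) (α : Arr ℕ) : langOf σ z α ⊆ langOf σ Mode.rc α := by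
  intro W hW
  cases z with
  | h =>
    obtain ⟨g, hg, rfl⟩ := hW
    exact Or.inl ⟨_, subCR_comp_single hg α⟩
  | p =>
    obtain ⟨s, hs, -⟩ := hW
    exact Or.inl ⟨s, hs⟩
  | r => exact Or.inl hW
  | c => exact Or.inr hW
  | rc => exact hW

section langOf

variable {z z' : Mode} {α β : Arr ℕ} {W : Arr σ}

theorem rows_le_of_mem_langOf (hW : W ∈ langOf σ z α) : α.rows ≤ W.rows := by
  rcases langOf_subset_langOf_rc z α hW with ⟨s, hs⟩ | ⟨s, hs⟩
  · exact rows_le_of_subCR_eq_some hs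
  · exact cols_le_of_subCR_eq_some (subRC_eq_some_iff.mp hs)

theorem cols_le_of_mem_langOf (hW : W ∈ langOf σ z α) : α.cols ≤ W.cols := by
  rcases langOf_subset_langOf_rc z α hW with ⟨s, hs⟩ | ⟨s, hs⟩
  · exact cols_le_of_subCR_eq_some hs
  · exact rows_le_of_subCR_eq_some (subRC_eq_some_iff.mp hs)

theorem exists_eq_map_of_mem_langOf (hW : W ∈ langOf σ z α) (hr : W.rows = α.rows)
    (hc : W.cols = α.cols) : ∃ f : ℕ → σ, W = α.map f := by
  rcases langOf_subset_langOf_rc z α hW with ⟨s, hs⟩ | ⟨s, hs⟩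
  · exact exists_eq_map_of_subCR_eq_some hs hr hc
  · obtain ⟨f, hf⟩ := exists_eq_map_of_subCR_eq_some (subRC_eq_some_iff.mp hs) hc hr
    exact ⟨f, congrArg transpose hf⟩

theorem rows_le_of_langOf_subset [Nonempty σ] (h : langOf σ z α ⊆ langOf σ z' β) :
    β.rows ≤ α.rows :=
  (rows_le_of_mem_langOf (h (map_mem_langOf (fun _ => Classical.arbitrary σ) z α)) :)

theorem cols_le_of_langOf_subset [Nonempty σ] (h : langOf σ z α ⊆ langOf σ z' β) :
    β.cols ≤ α.cols :=
  (cols_le_of_mem_langOf (h (map_mem_langOf (fun _ => Classical.arbitrary σ) z α)) :)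

theorem entry_eq_of_langOf_subset [Nontrivial σ] (h : langOf σ z α ⊆ langOf σ z' β)
    (hr : α.rows = β.rows) (hc : α.cols = β.cols) {i i' : Fin α.rows} {j j' : Fin α.cols}
    (hβ : β.entry (Fin.cast hr i) (Fin.cast hc j) = β.entry (Fin.cast hr i') (Fin.cast hc j')) :
    α.entry i j = α.entry i' j' := by
  by_contra hα
  obtain ⟨a, b, hab⟩ := exists_pair_ne σ
  let f : ℕ → σ := Function.update (fun _ => b) (α.entry i j) a
  obtain ⟨g, hg⟩ := exists_eq_map_of_mem_langOf (h (map_mem_langOf f z α)) hr hc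
  obtain ⟨_, _, hfg⟩ := eq_iff_entry_eq.mp hg
  refine hab ?_
  calc a
    _ = f (α.entry i j) := Eq.symm (Function.update_self (α.entry i j) a fun _ => b)
    _ = g (β.entry (Fin.cast hr i) (Fin.cast hc j)) := hfg i j
    _ = g (β.entry (Fin.cast hr i') (Fin.cast hc j')) := congrArg g hβ
    _ = f (α.entry i' j') := (hfg i' j').symm
    _ = b := Function.update_of_ne (Ne.symm hα) a fun _ => b

end langOf

end Arr

theorem stmt3_general {σ : Type} [Nontrivial σ] (z z' : Mode) (α β : Arr ℕ)
    (heq : langOf σ z α = langOf σ z' β) : EquivRen α β := by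
  have hr : α.rows = β.rows :=
    le_antisymm (rows_le_of_langOf_subset heq.superset) (rows_le_of_langOf_subset heq.subset)
  have hc : α.cols = β.cols :=
    le_antisymm (cols_le_of_langOf_subset heq.superset) (cols_le_of_langOf_subset heq.subset)
  exact ⟨hr, hc, fun i i' j j' =>
    ⟨entry_eq_of_langOf_subset heq.superset hr.symm hc.symm (i := Fin.cast hr i)
        (i' := Fin.cast hr i') (j := Fin.cast hc j) (j' := Fin.cast hc j'),
      entry_eq_of_langOf_subset heq.subset hr hc⟩⟩

/-- over an alphabet with at least two letters, equal array
pattern languages (of any modes) force the patterns to be equivalent up to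
renaming. -/
theorem stmt3 {σ : Type} [Fintype σ] (hcard : 2 ≤ Fintype.card σ)
    (z z' : Mode) (α β : Arr ℕ)
    (heq : langOf σ z α = langOf σ z' β) :
    EquivRen α β :=
  have : Nontrivial σ := Fintype.one_lt_card_iff_nontrivial.mp hcard
  stmt3_general z z' α β heq
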